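/- arXiv:1704.03311 — 3 statements merged into one kernel-verified Lean document; each statement's English description precedes it below -/
import Mathlib

section
/- Let Ξ be a finite alphabet with at least two elements, let n and b be integers with 2 ≤ b ≤ n, and let x ∈ Ξ^n be a vector whose Hamming weight ω_H(x) satisfies 0 < ω_H(x) ≤ n − (b−1) (weight measured relative to a fixed zero symbol 0 ∈ Ξ). Then ω_H(x) + b − 1 ≤ ω_b(x) ≤ b · ω_H(x), where ω_b(x) is the b-weight of x. -/
/-- The `b`-symbol read vector of `x ∈ Ξ^n`: its `i`-th entry is the `b`-tuple
`(x_i, x_{i+1}, …, x_{i+b-1})`, indices modulo `n`. -/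
def piB {Ξ : Type*} {n : ℕ} (b : ℕ) (x : Fin n → Ξ) : Fin n → (Fin b → Ξ) :=
  fun i j => x ⟨((i : ℕ) + (j : ℕ)) % n, Nat.mod_lt _ i.pos⟩

/-
Let `S` be the support of `x`, a subset of `ℤ/n`. The read vector is nonzero at `i` exactly when one
of `i, i + 1, …, i + b - 1` lies in `S`, so its support is the sumset `P + S` with
`P = {0, -1, …, -(b - 1)}`. The upper bound is `|P + S| ≤ |P| |S|`. For the lower bound, lengthening
`P` by one term either enlarges `P + S` or leaves it stable under translation by `-1`, and then
`P + S` is everything because `-1` generates `ℤ/n`.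
-/

open Finset
open scoped Pointwise

section ArithProg

variable {G : Type*} [AddGroup G] [DecidableEq G]

/-- The arithmetic progression `{0, g, …, (k - 1) • g}` with `k` terms, as a finset: repeated terms
are merged when `k` exceeds the order of `g`. -/
def arithProg (g : G) (k : ℕ) : Finset G :=
  (range k).image (· • g)

lemma arithProg_one (g : G) : arithProg g 1 = {0} := by
  simp [arithProg]

lemma arithProg_subset_succ (g : G) (k : ℕ) : arithProg g k ⊆ arithProg g (k + 1) :=
  image_subset_image (range_subset_range.2 k.le_succ)

lemma vadd_arithProg_subset_succ (g : G) (k : ℕ) :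
    g +ᵥ arithProg g k ⊆ arithProg g (k + 1) := by
  simp only [arithProg, vadd_finset_def, image_image]
  refine image_subset_iff.2 fun j hj ↦ mem_image.2 ⟨j + 1, ?_, succ_nsmul' g j⟩
  exact mem_range.2 (Nat.succ_lt_succ (mem_range.1 hj))

lemma card_arithProg_add_le (g : G) (k : ℕ) (s : Finset G) : #(arithProg g k + s) ≤ k * #s :=
  card_add_le.trans <| Nat.mul_le_mul_right _ <| card_image_le.trans_eq (card_range k)

lemma encard_zmultiples_le_card_of_vadd_subset {g : G} {s : Finset G} (hs : s.Nonempty)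
    (h : g +ᵥ s ⊆ s) : (AddSubgroup.zmultiples g : Set G).encard ≤ #s := by
  obtain ⟨a, ha⟩ := hs
  have hg : AddSubgroup.zmultiples g ≤ AddAction.stabilizer G s :=
    AddSubgroup.zmultiples_le_of_mem
      (AddAction.mem_stabilizer_finset_iff_vadd_finset_subset.2 h)
  have hmaps : Set.MapsTo (· + a) (AddSubgroup.zmultiples g : Set G) s :=
    fun c hc ↦ (AddAction.mem_stabilizer_finset.1 (hg hc) a).2 ha
  exact (Set.encard_le_encard_of_injOn hmaps (add_left_injective a).injOn).trans_eq
    (Set.encard_coe_eq_coe_finsetCard s)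

lemma min_encard_zmultiples_le_card_arithProg_add (g : G) {s : Finset G} (hs : s.Nonempty)
    (k : ℕ) :
    min (AddSubgroup.zmultiples g : Set G).encard ↑(#s + k) ≤ #(arithProg g (k + 1) + s) := by
  induction k with
  | zero => simp [arithProg_one]
  | succ k ih =>
    have hsub : arithProg g (k + 1) + s ⊆ arithProg g (k + 2) + s :=
      add_subset_add_right (arithProg_subset_succ g (k + 1))
    obtain heq | hne := eq_or_ne (arithProg g (k + 1) + s) (arithProg g (k + 2) + s)
    · have hstable : g +ᵥ (arithProg g (k + 1) + s) ⊆ arithProg g (k + 1) + s := by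
        conv_rhs => rw [heq]
        rw [← vadd_add_assoc]
        exact add_subset_add_right (vadd_arithProg_subset_succ g (k + 1))
      have hnonempty : (arithProg g (k + 1) + s).Nonempty :=
        .add ⟨0, mem_image.2 ⟨0, by simp⟩⟩ hs
      rw [← heq]
      exact (min_le_left _ _).trans (encard_zmultiples_le_card_of_vadd_subset hnonempty hstable)
    · have hlt : #(arithProg g (k + 1) + s) + 1 ≤ #(arithProg g (k + 2) + s) :=
        card_lt_card (hsub.ssubset_of_ne hne)
      calc min (AddSubgroup.zmultiples g : Set G).encard ↑(#s + (k + 1))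
          ≤ min (AddSubgroup.zmultiples g : Set G).encard ↑(#s + k) + 1 := by
            rw [min_add]
            exact min_le_min le_self_add (by push_cast; rw [add_assoc])
        _ ≤ #(arithProg g (k + 1) + s) + 1 := by gcongr
        _ ≤ #(arithProg g (k + 2) + s) := by exact_mod_cast hlt

end ArithProg

section ReadVector

variable {Ξ : Type*} {n : ℕ} [NeZero n]

lemma fin_val_add_nsmul_one (i : Fin n) (j : ℕ) : (i + j • (1 : Fin n)).val = (i + j) % n := by
  induction j with
  | zero => simp [Nat.mod_eq_of_lt i.isLt]
  | succ j ih =>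
    rw [succ_nsmul, ← add_assoc, Fin.val_add, ih, Fin.val_one', ← Nat.add_mod, add_assoc]

lemma fin_zmultiples_neg_one : AddSubgroup.zmultiples (-1 : Fin n) = ⊤ := by
  rw [AddSubgroup.zmultiples_neg, eq_top_iff]
  refine fun i _ ↦ AddSubgroup.mem_zmultiples_iff.2 ⟨i.val, Fin.ext ?_⟩
  simpa [Nat.mod_eq_of_lt i.isLt] using fin_val_add_nsmul_one (0 : Fin n) i.val

lemma piB_apply (b : ℕ) (x : Fin n → Ξ) (i : Fin n) (j : Fin b) :
    piB b x i j = x (i + j.val • (1 : Fin n)) :=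
  congrArg x (Fin.ext (fin_val_add_nsmul_one i j).symm)

lemma filter_piB_ne_eq_arithProg_add [DecidableEq Ξ] (b : ℕ) (x : Fin n → Ξ) (z : Ξ) :
    ({i | piB b x i ≠ fun _ ↦ z} : Finset (Fin n)) =
      arithProg (-1) b + ({i | x i ≠ z} : Finset (Fin n)) := by
  ext i
  simp only [mem_filter_univ, Function.ne_iff, piB_apply, mem_add, arithProg, mem_image, mem_range]
  constructor
  · rintro ⟨j, hj⟩
    exact ⟨_, ⟨j, j.isLt, rfl⟩, _, hj, by simp [add_comm i]⟩
  · rintro ⟨_, ⟨j, hj, rfl⟩, a, ha, rfl⟩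
    refine ⟨⟨j, hj⟩, ?_⟩
    convert ha using 2
    simp [add_comm _ a]

end ReadVector

theorem b_weight_bounds_general {Ξ : Type*} [DecidableEq Ξ] (z : Ξ) {n b : ℕ} (hb : b ≠ 0)
    (x : Fin n → Ξ) (hw : 0 < #{i | x i ≠ z}) :
    min n (#{i | x i ≠ z} + b - 1) ≤ #{i | piB b x i ≠ fun _ ↦ z} ∧
      #{i | piB b x i ≠ fun _ ↦ z} ≤ b * #{i | x i ≠ z} := by
  have hS := card_pos.1 hw
  have : NeZero n := hS.choose.neZero
  obtain ⟨k, rfl⟩ := Nat.exists_eq_add_one_of_ne_zero hb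
  rw [filter_piB_ne_eq_arithProg_add]
  refine ⟨?_, card_arithProg_add_le _ _ _⟩
  have hlower := min_encard_zmultiples_le_card_arithProg_add (-1) hS k
  rw [fin_zmultiples_neg_one, AddSubgroup.coe_top, Set.encard_univ, ENat.card_eq_coe_fintype_card,
    Fintype.card_fin] at hlower
  rw [← add_assoc, Nat.add_sub_cancel]
  simpa only [min_le_iff, Nat.cast_le] using hlower

/-- If `Ξ` is a finite alphabet with at least two elements, `2 ≤ b ≤ n`, and
`x ∈ Ξ^n` has Hamming weight (relative to a fixed zero symbol `z`) satisfying
`0 < ω_H(x) ≤ n - (b-1)`, then `ω_H(x) + b - 1 ≤ ω_b(x) ≤ b * ω_H(x)`. -/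
theorem b_weight_bounds {Ξ : Type*} [Fintype Ξ] [DecidableEq Ξ]
    (hcard : 1 < Fintype.card Ξ) (z : Ξ) {n b : ℕ} (hb2 : 2 ≤ b) (hbn : b ≤ n)
    (x : Fin n → Ξ)
    (hw0 : 0 < (Finset.univ.filter fun i => x i ≠ z).card)
    (hwn : (Finset.univ.filter fun i => x i ≠ z).card ≤ n - (b - 1)) :
    (Finset.univ.filter fun i => x i ≠ z).card + b - 1
        ≤ (Finset.univ.filter fun i => piB b x i ≠ fun _ => z).card ∧
      (Finset.univ.filter fun i => piB b x i ≠ fun _ => z).card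
        ≤ b * (Finset.univ.filter fun i => x i ≠ z).card := by
  have hbounds := b_weight_bounds_general z (b := b) (by omega) x hw0
  exact ⟨by omega, hbounds.2⟩
end

section
/- Let p be a prime and m, e positive integers, and for 0 ≤ i ≤ p^e let C_i = ⟨(x−1)^i⟩ ⊆ 𝔽_{p^m}[x]/⟨x^{p^e}−1⟩ be the cyclic code of length p^e over 𝔽_{p^m}. Then the minimum Hamming distance of C_i is: d_H(C_i) = 1 if i = 0; d_H(C_i) = β + 2 if βp^{e−1} + 1 ≤ i ≤ (β+1)p^{e−1} for some 0 ≤ β ≤ p−2; d_H(C_i) = (t+1)p^k if p^e − p^{e−k} + (t−1)p^{e−k−1} + 1 ≤ i ≤ p^e − p^{e−k} + t p^{e−k−1} for some 1 ≤ t ≤ p−1 and 1 ≤ k ≤ e−1; and d_H(C_i) = 0 if i = p^e. -/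
open Polynomial

/-- The cyclic code `C_i = ⟨(x-1)^i⟩ ⊆ 𝔽_{p^m}[x]/⟨x^{p^e}-1⟩` of length `p^e`
over `𝔽_{p^m}`, viewed as the set of coefficient vectors `c ∈ 𝔽_{p^m}^{p^e}`
whose associated polynomial is congruent to a multiple of `(x-1)^i` modulo
`x^{p^e} - 1`. -/
noncomputable def Ccode (p m e : ℕ) [Fact p.Prime] (i : ℕ) :
    Set (Fin (p ^ e) → GaloisField p m) :=
  {c | ∃ f : Polynomial (GaloisField p m),
    (X ^ (p ^ e) - 1 : Polynomial (GaloisField p m)) ∣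
      ((∑ j : Fin (p ^ e), Polynomial.C (c j) * X ^ (j : ℕ)) - (X - 1) ^ i * f)}

/-- The minimum Hamming distance of a code `C ⊆ F^n` (0 if `C` has at most one
codeword). -/
noncomputable def dHcode {F : Type*} {n : ℕ} (Cc : Set (Fin n → F)) : ℕ :=
  letI := Classical.decEq F
  sInf {d | ∃ x ∈ Cc, ∃ y ∈ Cc, x ≠ y ∧ d = hammingDist x y}

/-!
In characteristic `p` we have `(X - 1) ^ p ^ s = X ^ p ^ s - 1`. A nonzero polynomial of degree less
than `p ^ (s + 1)` and weight `w` has multiplicity at most `(w - 1) * p ^ s` at any nonzero point: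
dividing by `X`, differentiating, or substituting `X` for `X ^ p` when the derivative vanishes
lowers the degree and preserves the bound. This is sharp for `(X ^ p ^ s - 1) ^ (t + 1)`, which
settles the multiples of degree less than `p ^ (s + 1)`. Multiplication by
`(X - 1) ^ ((p ^ k - 1) * p ^ r) = ∑ j < p ^ k, X ^ (p ^ r * j)` concatenates `p ^ k` copies of a
polynomial of degree less than `p ^ r`, so it multiplies weights by `p ^ k`; for large `i` every
relevant multiple of `(X - 1) ^ i` arises in this way.
-/

section Weight

variable {R : Type*} [Semiring R]

lemma card_support_X_pow_mul (n : ℕ) (g : R[X]) : (X ^ n * g).support.card = g.support.card := by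
  have hsupp : (X ^ n * g).support = g.support.map (addLeftEmbedding n) := by
    ext a
    simp only [mem_support_iff, coeff_X_pow_mul', Finset.mem_map, addLeftEmbedding_apply]
    constructor
    · intro ha
      by_cases hna : n ≤ a
      · exact ⟨a - n, by simpa only [hna, if_true] using ha, Nat.add_sub_cancel' hna⟩
      · simp only [hna, if_false, ne_eq, not_true_eq_false] at ha
    · rintro ⟨b, hb, rfl⟩
      simpa using hb
  rw [hsupp, Finset.card_map]

lemma card_support_X_mul (g : R[X]) : (X * g).support.card = g.support.card := by
  simpa only [pow_one] using card_support_X_pow_mul 1 g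

lemma card_support_add_X_pow_mul {n : ℕ} {f : R[X]} (hf : f.degree < n) (g : R[X]) :
    (f + X ^ n * g).support.card = f.support.card + g.support.card := by
  classical
  have hdisj : Disjoint f.support (X ^ n * g).support := by
    rw [Finset.disjoint_left]
    intro a haf hag
    have han : a < n := Nat.cast_lt.1 ((le_degree_of_mem_supp a haf).trans_lt hf)
    exact mem_support_iff.1 hag (by rw [coeff_X_pow_mul', if_neg han.not_ge])
  have hsupp : (f + X ^ n * g).support = f.support ∪ (X ^ n * g).support := by
    refine support_add.antisymm fun a ha ↦ ?_
    rcases Finset.mem_union.1 ha with haf | hag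
    · have hag := notMem_support_iff.1 (Finset.disjoint_left.1 hdisj haf)
      rwa [mem_support_iff, coeff_add, hag, add_zero, ← mem_support_iff]
    · have haf := notMem_support_iff.1 (Finset.disjoint_right.1 hdisj hag)
      rwa [mem_support_iff, coeff_add, haf, zero_add, ← mem_support_iff]
  rw [hsupp, Finset.card_union_of_disjoint hdisj, card_support_X_pow_mul]

lemma degree_geom_sum_mul_lt {q : ℕ} {g : R[X]} (hg : g.degree < q) (N : ℕ) :
    ((∑ j ∈ Finset.range N, (X : R[X]) ^ (q * j)) * g).degree < ↑(q * N) := by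
  rw [degree_lt_iff_coeff_zero] at hg ⊢
  intro a ha
  rw [Finset.sum_mul, finsetSum_coeff]
  refine Finset.sum_eq_zero fun j hj ↦ ?_
  have hj' : q * j + q ≤ a := calc
    q * j + q = q * (j + 1) := by ring
    _ ≤ q * N := by gcongr; exact Finset.mem_range.1 hj
    _ ≤ a := ha
  rw [coeff_X_pow_mul', if_pos (by lia), hg _ (by lia)]

lemma card_support_geom_sum_mul {q : ℕ} {g : R[X]} (hg : g.degree < q) (N : ℕ) :
    ((∑ j ∈ Finset.range N, (X : R[X]) ^ (q * j)) * g).support.card = N * g.support.card := by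
  induction N with
  | zero => simp
  | succ N ih =>
    rw [Finset.sum_range_succ, add_mul, card_support_add_X_pow_mul (degree_geom_sum_mul_lt hg N),
      ih, Nat.succ_mul]

lemma card_support_derivative_lt {g : R[X]} (h0 : g.coeff 0 ≠ 0) :
    (derivative g).support.card < g.support.card := by
  have hsub : (derivative g).support.map (addRightEmbedding 1) ⊆ g.support.erase 0 := by
    intro n hn
    obtain ⟨a, ha, rfl⟩ := Finset.mem_map.1 hn
    exact Finset.mem_erase.2 ⟨Nat.succ_ne_zero a, of_mem_support_derivative ha⟩
  calc (derivative g).support.card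
      = ((derivative g).support.map (addRightEmbedding 1)).card := (Finset.card_map _).symm
    _ ≤ (g.support.erase 0).card := Finset.card_le_card hsub
    _ < g.support.card := Finset.card_erase_lt_of_mem (mem_support_iff.2 h0)

end Weight

lemma card_support_expand {R : Type*} [CommSemiring R] {p : ℕ} (hp : 0 < p) (g : R[X]) :
    (expand R p g).support.card = g.support.card := by
  have hsupp : (expand R p g).support = g.support.image (· * p) := by
    ext n
    simp only [mem_support_iff, Finset.mem_image, coeff_expand hp, ne_eq, ite_eq_right_iff,
      Classical.not_imp]
    constructor
    · rintro ⟨⟨a, rfl⟩, ha⟩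
      exact ⟨a, by rwa [Nat.mul_div_cancel_left _ hp] at ha, mul_comm a p⟩
    · rintro ⟨a, ha, rfl⟩
      exact ⟨dvd_mul_left p a, by rwa [Nat.mul_div_cancel _ hp]⟩
  rw [hsupp, Finset.card_image_of_injective _ fun _ _ ↦ Nat.eq_of_mul_eq_mul_right hp]

section Multiplicity

variable {R : Type*} [CommRing R] [IsDomain R]

lemma rootMultiplicity_X_mul {a : R} (ha : a ≠ 0) (g : R[X]) :
    (X * g).rootMultiplicity a = g.rootMultiplicity a := by
  obtain rfl | hg := eq_or_ne g 0
  · rw [mul_zero]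
  have hX : (X : R[X]).rootMultiplicity a = 0 :=
    rootMultiplicity_eq_zero (by simpa only [IsRoot.def, eval_X] using ha)
  rw [rootMultiplicity_mul (mul_ne_zero X_ne_zero hg), hX, zero_add]

lemma rootMultiplicity_add_le_card_support_mul_of_derivative {R : Type*} [CommRing R] {a : R}
    {g : R[X]} {q : ℕ} (h0 : g.coeff 0 ≠ 0) (hder : derivative g ≠ 0) (hq : 0 < q)
    (h : (derivative g).rootMultiplicity a + q ≤ (derivative g).support.card * q) :
    g.rootMultiplicity a + q ≤ g.support.card * q := by
  have hmult : g.rootMultiplicity a ≤ (derivative g).rootMultiplicity a + 1 :=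
    Nat.sub_le_iff_le_add.1
      (rootMultiplicity_sub_one_le_derivative_rootMultiplicity_of_ne_zero g a hder)
  calc g.rootMultiplicity a + q
      ≤ (derivative g).rootMultiplicity a + q + q := by lia
    _ ≤ (derivative g).support.card * q + q := Nat.add_le_add_right h q
    _ = ((derivative g).support.card + 1) * q := (Nat.succ_mul _ _).symm
    _ ≤ g.support.card * q := Nat.mul_le_mul_right q (card_support_derivative_lt h0)

variable (p : ℕ) [Fact p.Prime] [CharP R p]

lemma rootMultiplicity_add_pow_le_card_support_mul {a : R} (ha : a ≠ 0) {s : ℕ} {g : R[X]}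
    (hg : g ≠ 0) (hdeg : g.natDegree < p ^ (s + 1)) :
    g.rootMultiplicity a + p ^ s ≤ g.support.card * p ^ s := by
  have hp : p.Prime := Fact.out
  induction hn : g.natDegree using Nat.strong_induction_on generalizing a g s with
  | _ n ih =>
  subst hn
  by_cases hconst : g.natDegree = 0
  · rw [eq_C_of_natDegree_eq_zero hconst, rootMultiplicity_C, zero_add,
      ← eq_C_of_natDegree_eq_zero hconst]
    exact Nat.le_mul_of_pos_left _ (Finset.card_pos.2 (support_nonempty.2 hg))
  by_cases h0 : g.coeff 0 = 0
  · obtain ⟨h, rfl⟩ := X_dvd_iff.2 h0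
    have hh : h ≠ 0 := right_ne_zero_of_mul hg
    have hlt : h.natDegree < (X * h).natDegree := by simp [natDegree_X_mul hh]
    rw [card_support_X_mul, rootMultiplicity_X_mul ha]
    exact ih _ hlt ha hh (hlt.trans hdeg) rfl
  by_cases hder : derivative g = 0
  · obtain ⟨h, rfl⟩ : ∃ h, expand R p h = g := ⟨_, expand_contract p hder hp.ne_zero⟩
    rw [natDegree_expand] at hconst hdeg
    have hh : h ≠ 0 := (expand_ne_zero hp.pos).1 hg
    have hlt : h.natDegree < (expand R p h).natDegree := by
      rw [natDegree_expand]
      exact lt_mul_of_one_lt_right (Nat.pos_of_mul_pos_right (Nat.pos_of_ne_zero hconst)) hp.one_lt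
    have hdeg' : h.natDegree < p ^ s := lt_of_mul_lt_mul_right (pow_succ p s ▸ hdeg) p.zero_le
    rw [card_support_expand hp.pos, rootMultiplicity_expand]
    obtain _ | s := s
    · simp_all
    calc p * h.rootMultiplicity (a ^ p) + p ^ (s + 1)
        = (h.rootMultiplicity (a ^ p) + p ^ s) * p := by ring
      _ ≤ h.support.card * p ^ s * p :=
        Nat.mul_le_mul_right p (ih _ hlt (pow_ne_zero p ha) hh hdeg' rfl)
      _ = h.support.card * p ^ (s + 1) := by ring
  · have hlt : (derivative g).natDegree < g.natDegree := natDegree_derivative_lt hconst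
    exact rootMultiplicity_add_le_card_support_mul_of_derivative h0 hder (pow_pos hp.pos s)
      (ih _ hlt ha hder (hlt.trans hdeg) rfl)

lemma add_two_le_card_support_of_X_sub_one_pow_dvd {s t i : ℕ} (hi : t * p ^ s < i) {g : R[X]}
    (hg : g ≠ 0) (hdeg : g.degree < ↑(p ^ (s + 1))) (hdvd : (X - 1) ^ i ∣ g) :
    t + 2 ≤ g.support.card := by
  have hmult : i ≤ g.rootMultiplicity 1 := (le_rootMultiplicity_iff hg).2 (by rwa [C_1])
  have hbound := rootMultiplicity_add_pow_le_card_support_mul p one_ne_zero hg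
    ((natDegree_lt_iff_degree_lt hg).2 hdeg)
  have hlt : (t + 1) * p ^ s < g.support.card * p ^ s := by
    rw [Nat.succ_mul]
    lia
  exact lt_of_mul_lt_mul_right hlt (Nat.zero_le _)

end Multiplicity

section XSubOne

lemma monic_X_sub_one_pow {R : Type*} [CommRing R] (n : ℕ) : ((X - 1 : R[X]) ^ n).Monic := by
  simpa only [C_1] using (monic_X_sub_C (1 : R)).pow n

lemma degree_X_sub_one_pow {R : Type*} [CommRing R] [Nontrivial R] (n : ℕ) :
    ((X - 1 : R[X]) ^ n).degree = n := by
  rw [degree_eq_natDegree (monic_X_sub_one_pow n).ne_zero, ← C_1, (monic_X_sub_C 1).natDegree_pow,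
    natDegree_X_sub_C, mul_one]

lemma degree_X_sub_one_pow_mul_lt_iff {R : Type*} [CommRing R] [Nontrivial R] {n q : ℕ}
    {g : R[X]} : ((X - 1) ^ n * g).degree < ↑(n + q) ↔ g.degree < q := by
  rw [mul_comm, (monic_X_sub_one_pow n).degree_mul, degree_X_sub_one_pow, add_comm, Nat.cast_add]
  exact WithBot.add_lt_add_iff_left (WithBot.coe_ne_bot)

variable {R : Type*} [CommRing R] (p : ℕ) [Fact p.Prime] [CharP R p]

lemma X_sub_one_pow_char_pow (n : ℕ) : (X - 1 : R[X]) ^ p ^ n = X ^ p ^ n - 1 := by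
  rw [sub_pow_char_pow, one_pow]

lemma X_sub_one_pow_sub_one_mul_eq_geom_sum (k r : ℕ) :
    (X - 1 : R[X]) ^ ((p ^ k - 1) * p ^ r) = ∑ j ∈ Finset.range (p ^ k), X ^ (p ^ r * j) := by
  refine (monic_X_sub_one_pow (p ^ r)).isRegular.right ?_
  have hp : 0 < p ^ k := pow_pos (Fact.out : p.Prime).pos k
  calc (X - 1 : R[X]) ^ ((p ^ k - 1) * p ^ r) * (X - 1) ^ p ^ r
      = (X - 1) ^ p ^ (r + k) := by
        rw [← pow_add, ← Nat.succ_mul, Nat.succ_eq_add_one, Nat.sub_add_cancel hp, ← pow_add,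
          add_comm k]
    _ = (X ^ p ^ r) ^ p ^ k - 1 := by rw [X_sub_one_pow_char_pow, pow_add, pow_mul]
    _ = (∑ j ∈ Finset.range (p ^ k), (X ^ p ^ r) ^ j) * (X ^ p ^ r - 1) := (geom_sum_mul _ _).symm
    _ = (∑ j ∈ Finset.range (p ^ k), X ^ (p ^ r * j)) * (X - 1) ^ p ^ r := by
        simp only [pow_mul, X_sub_one_pow_char_pow]

lemma card_support_X_sub_one_pow_mul_of_degree_lt (k : ℕ) {r : ℕ} {g : R[X]}
    (hg : g.degree < ↑(p ^ r)) :
    ((X - 1) ^ ((p ^ k - 1) * p ^ r) * g).support.card = p ^ k * g.support.card := by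
  rw [X_sub_one_pow_sub_one_mul_eq_geom_sum, card_support_geom_sum_mul hg]

lemma card_support_X_sub_one_pow_mul_char_pow_le (s t : ℕ) :
    ((X - 1 : R[X]) ^ (t * p ^ s)).support.card ≤ t + 1 := by
  have hexpand : (X - 1 : R[X]) ^ (t * p ^ s) = expand R (p ^ s) ((X - 1) ^ t) := by
    rw [mul_comm, pow_mul, X_sub_one_pow_char_pow, map_pow, map_sub, expand_X, map_one]
  rw [hexpand, card_support_expand (pow_pos (Fact.out : p.Prime).pos s)]
  refine (card_supp_le_succ_natDegree _).trans (Nat.succ_le_succ ?_)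
  simpa only [C_1, mul_one] using natDegree_pow_le_of_le t (natDegree_X_sub_C_le (1 : R))

end XSubOne

/-- The weights (numbers of nonzero coefficients) of the nonzero multiples of `g` of degree less
than `n`. For `g ∣ X ^ n - 1` these are the weights of the nonzero words of `cyclicCode n g`. -/
def multipleWeights {R : Type*} [CommRing R] (n : ℕ) (g : R[X]) : Set ℕ :=
  {w | ∃ q : R[X], q ≠ 0 ∧ q.degree < n ∧ g ∣ q ∧ q.support.card = w}

section MultipleWeights

variable {R : Type*} [CommRing R]

lemma isLeast_multipleWeights_one [Nontrivial R] {n : ℕ} (hn : 0 < n) :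
    IsLeast (multipleWeights n (1 : R[X])) 1 := by
  refine ⟨⟨1, one_ne_zero, ?_, one_dvd 1, ?_⟩, ?_⟩
  · rw [degree_one]
    exact_mod_cast hn
  · rw [← C_1, support_C one_ne_zero, Finset.card_singleton]
  · rintro _ ⟨q, hq, -, -, rfl⟩
    exact Finset.card_pos.2 (support_nonempty.2 hq)

lemma multipleWeights_eq_empty [IsDomain R] {n : ℕ} {g : R[X]} (hg : n ≤ g.degree) :
    multipleWeights n g = ∅ := by
  refine Set.eq_empty_of_forall_notMem ?_
  rintro _ ⟨q, hq, hdeg, hdvd, -⟩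
  exact hdeg.not_ge (hg.trans (degree_le_of_dvd hdvd hq))

variable [IsDomain R] (p : ℕ) [Fact p.Prime] [CharP R p]

lemma isLeast_multipleWeights_X_sub_one_pow {s t i : ℕ} (ht : t + 1 < p) (hlo : t * p ^ s < i)
    (hup : i ≤ (t + 1) * p ^ s) :
    IsLeast (multipleWeights (p ^ (s + 1)) ((X - 1 : R[X]) ^ i)) (t + 2) := by
  set g : R[X] := (X - 1) ^ ((t + 1) * p ^ s)
  have hg : g ≠ 0 := (monic_X_sub_one_pow _).ne_zero
  have hdeg : g.degree < ↑(p ^ (s + 1)) := by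
    rw [degree_X_sub_one_pow, pow_succ', Nat.cast_lt]
    exact Nat.mul_lt_mul_of_pos_right ht (pow_pos (Fact.out : p.Prime).pos s)
  have hdvd : (X - 1) ^ i ∣ g := pow_dvd_pow _ hup
  refine ⟨⟨g, hg, hdeg, hdvd, ?_⟩, ?_⟩
  · exact (card_support_X_sub_one_pow_mul_char_pow_le p s (t + 1)).antisymm
      (add_two_le_card_support_of_X_sub_one_pow_dvd p hlo hg hdeg hdvd)
  · rintro _ ⟨q, hq, hqdeg, hqdvd, rfl⟩
    exact add_two_le_card_support_of_X_sub_one_pow_dvd p hlo hq hqdeg hqdvd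

lemma multipleWeights_X_sub_one_pow_add (k r i : ℕ) :
    multipleWeights (p ^ (k + r)) ((X - 1 : R[X]) ^ ((p ^ k - 1) * p ^ r + i)) =
      (p ^ k * ·) '' multipleWeights (p ^ r) ((X - 1 : R[X]) ^ i) := by
  have hlen : p ^ (k + r) = (p ^ k - 1) * p ^ r + p ^ r := by
    rw [pow_add, ← Nat.succ_mul, Nat.succ_eq_add_one,
      Nat.sub_add_cancel (pow_pos (Fact.out : p.Prime).pos k)]
  have hne : (X - 1 : R[X]) ^ ((p ^ k - 1) * p ^ r) ≠ 0 := (monic_X_sub_one_pow _).ne_zero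
  ext w
  constructor
  · rintro ⟨_, hq, hdeg, ⟨f, rfl⟩, rfl⟩
    rw [pow_add, mul_assoc] at hq hdeg ⊢
    rw [hlen, degree_X_sub_one_pow_mul_lt_iff] at hdeg
    exact ⟨_, ⟨_, right_ne_zero_of_mul hq, hdeg, dvd_mul_right _ f, rfl⟩,
      (card_support_X_sub_one_pow_mul_of_degree_lt p k hdeg).symm⟩
  · rintro ⟨_, ⟨h, hh, hdeg, hdvd, rfl⟩, rfl⟩
    refine ⟨_, mul_ne_zero hne hh, ?_, ?_, card_support_X_sub_one_pow_mul_of_degree_lt p k hdeg⟩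
    · rwa [hlen, degree_X_sub_one_pow_mul_lt_iff]
    · rw [pow_add]
      exact mul_dvd_mul_left _ hdvd

lemma isLeast_multipleWeights_X_sub_one_pow_add {k s t i : ℕ} (ht : t + 1 < p)
    (hlo : (p ^ k - 1) * p ^ (s + 1) + t * p ^ s < i)
    (hup : i ≤ (p ^ k - 1) * p ^ (s + 1) + (t + 1) * p ^ s) :
    IsLeast (multipleWeights (p ^ (k + (s + 1))) ((X - 1 : R[X]) ^ i)) ((t + 2) * p ^ k) := by
  obtain ⟨i, rfl⟩ := Nat.exists_eq_add_of_le (Nat.le_of_add_right_le hlo.le)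
  rw [multipleWeights_X_sub_one_pow_add, mul_comm (t + 2)]
  exact mul_right_mono.map_isLeast
    (isLeast_multipleWeights_X_sub_one_pow p ht (by lia) (by lia))

end MultipleWeights

/-- The cyclic code of length `n` generated by `g`, i.e. the ideal `⟨g⟩` of `R[X] / ⟨X ^ n - 1⟩`,
as the set of coefficient vectors of its elements. -/
def cyclicCode {R : Type*} [CommRing R] (n : ℕ) (g : R[X]) : Set (Fin n → R) :=
  {c | ∃ f : R[X], X ^ n - 1 ∣ (∑ j : Fin n, C (c j) * X ^ (j : ℕ)) - g * f}

section CyclicCode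

variable {R : Type*} [CommRing R]

lemma mem_cyclicCode_iff [DecidableEq R] {n : ℕ} {g : R[X]} (hg : g ∣ X ^ n - 1)
    {c : Fin n → R} : c ∈ cyclicCode n g ↔ g ∣ ofFn n c := by
  simp only [cyclicCode, Set.mem_ofPred_eq, C_mul_X_pow_eq_monomial, ← ofFn_eq_sum_monomial]
  constructor
  · rintro ⟨f, hf⟩
    exact (dvd_sub_left (dvd_mul_right g f)).1 (hg.trans hf)
  · rintro ⟨f, hf⟩
    exact ⟨f, by rw [hf, sub_self]; exact dvd_zero _⟩

lemma hammingDist_eq_card_support_ofFn_sub [DecidableEq R] {n : ℕ} (x y : Fin n → R) :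
    hammingDist x y = (ofFn n (x - y)).support.card := by
  have hsupp : (ofFn n (x - y)).support =
      (Finset.univ.filter fun j ↦ x j ≠ y j).map Fin.valEmbedding := by
    ext a
    by_cases ha : a < n
    · simp [ha, sub_eq_zero, Fin.exists_iff]
    · simp only [mem_support_iff, ofFn_coeff_eq_zero_of_ge _ (not_lt.1 ha), ne_eq,
        not_true_eq_false, Finset.mem_map, false_iff]
      rintro ⟨j, -, rfl⟩
      exact ha j.isLt
  rw [hsupp, Finset.card_map, hammingDist]

lemma dHcode_cyclicCode {n : ℕ} {g : R[X]} (hg : g ∣ X ^ n - 1) :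
    dHcode (cyclicCode n g) = sInf (multipleWeights n g) := by
  classical
  rw [dHcode]
  congr 1
  ext w
  constructor
  · rintro ⟨x, hx, y, hy, hxy, rfl⟩
    rw [mem_cyclicCode_iff hg] at hx hy
    refine ⟨ofFn n (x - y), ?_, ofFn_degree_lt _, ?_, ?_⟩
    · exact (map_ne_zero_iff _ (injective_ofFn n)).2 (sub_ne_zero.2 hxy)
    · rw [map_sub]
      exact dvd_sub hx hy
    · rw [← hammingDist_eq_card_support_ofFn_sub]
  · rintro ⟨q, hq, hdeg, hdvd, rfl⟩
    have hofFn : ofFn n (toFn n q) = q :=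
      ofFn_comp_toFn_eq_id_of_natDegree_lt ((natDegree_lt_iff_degree_lt hq).2 hdeg)
    refine ⟨toFn n q, ?_, 0, ?_, ?_, ?_⟩
    · rwa [mem_cyclicCode_iff hg, hofFn]
    · rw [mem_cyclicCode_iff hg, map_zero]
      exact dvd_zero g
    · rintro h
      exact hq (by rw [← hofFn, h, map_zero])
    · rw [hammingDist_eq_card_support_ofFn_sub, sub_zero, hofFn]

lemma dHcode_cyclicCode_X_sub_one_pow (p : ℕ) [Fact p.Prime] [CharP R p] {e i : ℕ}
    (hi : i ≤ p ^ e) : dHcode (cyclicCode (p ^ e) ((X - 1 : R[X]) ^ i)) =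
      sInf (multipleWeights (p ^ e) ((X - 1 : R[X]) ^ i)) :=
  dHcode_cyclicCode (X_sub_one_pow_char_pow (R := R) p e ▸ pow_dvd_pow _ hi)

end CyclicCode

lemma Ccode_eq_cyclicCode (p m e : ℕ) [Fact p.Prime] (i : ℕ) :
    Ccode p m e i = cyclicCode (p ^ e) ((X - 1) ^ i) :=
  rfl

theorem hamming_distance_repeated_root_general {R : Type*} [CommRing R] [IsDomain R] (p e : ℕ)
    [Fact p.Prime] [CharP R p] (i : ℕ) (hi : i ≤ p ^ e) :
    (i = 0 → dHcode (cyclicCode (p ^ e) ((X - 1 : R[X]) ^ i)) = 1) ∧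
    (∀ t k : ℕ, 1 ≤ t → t < p → k < e →
      p ^ e - p ^ (e - k) + (t - 1) * p ^ (e - k - 1) + 1 ≤ i →
      i ≤ p ^ e - p ^ (e - k) + t * p ^ (e - k - 1) →
      dHcode (cyclicCode (p ^ e) ((X - 1 : R[X]) ^ i)) = (t + 1) * p ^ k) ∧
    (i = p ^ e → dHcode (cyclicCode (p ^ e) ((X - 1 : R[X]) ^ i)) = 0) := by
  have hp : p.Prime := Fact.out
  rw [dHcode_cyclicCode_X_sub_one_pow p hi]
  refine ⟨?_, fun t k ht htp hk hlo hup ↦ ?_, ?_⟩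
  · rintro rfl
    exact pow_zero (X - 1 : R[X]) ▸ (isLeast_multipleWeights_one (pow_pos hp.pos e)).csInf_eq
  · obtain ⟨s, rfl⟩ : ∃ s, e = k + (s + 1) := ⟨e - k - 1, by lia⟩
    obtain ⟨t, rfl⟩ := Nat.exists_eq_add_of_le' ht
    have hlen : p ^ (k + (s + 1)) - p ^ (s + 1) = (p ^ k - 1) * p ^ (s + 1) := by
      rw [pow_add, Nat.sub_mul, one_mul]
    simp only [Nat.add_sub_cancel_left, Nat.add_sub_cancel, hlen] at hlo hup
    exact (isLeast_multipleWeights_X_sub_one_pow_add p htp hlo hup).csInf_eq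
  · rintro rfl
    rw [multipleWeights_eq_empty (degree_X_sub_one_pow _).ge, Nat.sInf_empty]

/-- The Hamming distance distribution of the cyclic codes
`C_i = ⟨(x-1)^i⟩ ⊆ 𝔽_{p^m}[x]/⟨x^{p^e}-1⟩` for `0 ≤ i ≤ p^e`:
`d_H(C_0) = 1`; `d_H(C_i) = β+2` if `βp^{e-1}+1 ≤ i ≤ (β+1)p^{e-1}` with
`0 ≤ β ≤ p-2`; `d_H(C_i) = (t+1)p^k` if
`p^e - p^{e-k} + (t-1)p^{e-k-1} + 1 ≤ i ≤ p^e - p^{e-k} + tp^{e-k-1}` with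
`1 ≤ t ≤ p-1`, `1 ≤ k ≤ e-1`; and `d_H(C_{p^e}) = 0`. -/
theorem hamming_distance_repeated_root (p m e : ℕ) [Fact p.Prime]
    (hm : 0 < m) (he : 0 < e) (i : ℕ) (hi : i ≤ p ^ e) :
    (i = 0 → dHcode (Ccode p m e i) = 1) ∧
    (∀ β : ℕ, β ≤ p - 2 → β * p ^ (e - 1) + 1 ≤ i → i ≤ (β + 1) * p ^ (e - 1) →
      dHcode (Ccode p m e i) = β + 2) ∧
    (∀ t k : ℕ, 1 ≤ t → t ≤ p - 1 → 1 ≤ k → k ≤ e - 1 →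
      p ^ e - p ^ (e - k) + (t - 1) * p ^ (e - k - 1) + 1 ≤ i →
      i ≤ p ^ e - p ^ (e - k) + t * p ^ (e - k - 1) →
      dHcode (Ccode p m e i) = (t + 1) * p ^ k) ∧
    (i = p ^ e → dHcode (Ccode p m e i) = 0) := by
  have hp2 := (Fact.out : p.Prime).two_le
  rw [Ccode_eq_cyclicCode]
  obtain ⟨h0, hmid, htop⟩ := hamming_distance_repeated_root_general (R := GaloisField p m) p e i hi
  refine ⟨h0, fun β hβ hlo hup ↦ ?_, fun t k ht htp _ hk ↦ hmid t k ht (by lia) (by lia), htop⟩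
  -- The range indexed by `β` is the range for `t = β + 1` and `k = 0`.
  simpa only [pow_zero, mul_one] using
    hmid (β + 1) 0 (by lia) (by lia) he (by simpa using hlo) (by simpa using hup)
end

section
/- Let p be a prime, m a positive integer, and e, k integers with e ≥ 2 and 1 ≤ k ≤ e−1. Let g(x) = Σ_{j=0}^d g_j x^j be a nonzero polynomial in 𝔽_{p^m}[x] of degree d < p^{e−k}, let b be an integer with 2 ≤ b ≤ p^e − d, and let c(x) = (x−1)^{p^e − p^{e−k}} g(x), viewed as an element of 𝔽_{p^m}[x]/⟨x^{p^e}−1⟩. If d ≤ p^{e−k} − b, or if g_j = 0 for every j with 0 ≤ j ≤ b − p^{e−k} + d − 1, then ω_b(c(x)) = p^k · ω_b(g(x)). -/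
/-!
A `b`-symbol window is determined by the position of its last entry, so a window of a word with
support `S` is nonzero exactly when its last position lies in the sumset `S + {0, …, b - 1}`. If
`S ⊆ [l, d]` with `d < n` and `d + b ≤ n + l`, this sumset lies in a single period `[l, l + n)`,
hence is counted faithfully modulo `n`: the `b`-weight does not depend on the length `n`.

With `q = p^(e-k)`, the identity `(X - 1)^(p^e - q) = 1 + X^q + ⋯ + X^(q(p^k - 1))` in
characteristic `p` shows that `c` is `p^k` concatenated copies of `g`, seen as a word of length `q`.
Hence `ω_b(c)` is `p^k` times the `b`-weight of `g` at length `q`. Either alternative of the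
hypothesis gives `d + b ≤ q + l`, where `l` is the order of `g` at `0`, so `g` has the same
`b`-weight at the lengths `q` and `p^e`.
-/

open Polynomial

/-- The `b`-weight `ω_b(x) = ω_H(π_b(x))` of `x ∈ F^n`: the number of nonzero
`b`-tuples in the `b`-symbol read vector of `x`. -/
noncomputable def wB {F : Type*} [Zero F] {n : ℕ} (b : ℕ) (x : Fin n → F) : ℕ :=
  letI := Classical.decEq F
  (Finset.univ.filter fun i => piB b x i ≠ fun _ => (0 : F)).card

/-- The coefficient vector in `F^n` of a polynomial (of degree `< n`). -/
noncomputable def coeffVec {F : Type*} [Semiring F] (n : ℕ) (f : Polynomial F) :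
    Fin n → F :=
  fun j => f.coeff j

open Finset Function
open scoped Pointwise

lemma count_mul_of_periodic {P : ℕ → Prop} [DecidablePred P] {a : ℕ} (hP : Periodic P a) (m : ℕ) :
    Nat.count P (a * m) = m * Nat.count P a := by
  induction m with
  | zero => simp
  | succ m ih =>
    have hshift : (fun i => P (a * m + i)) = P := by
      funext i
      simpa only [Nat.cast_id, mul_comm, add_comm i] using hP.nat_mul m i
    rw [mul_add_one, Nat.count_add, ih, add_one_mul]
    simp only [hshift]

lemma count_window_eq_card_add_range {S : Finset ℕ} {l d n b : ℕ} (hS : S ⊆ Icc l d) (hdn : d < n)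
    (hgap : d + b ≤ n + l) :
    Nat.count (fun i => ∃ j < b, (i + j) % n ∈ S) n = #(S + range b) := by
  have hper : Periodic (fun i => ∃ j < b, (i + j) % n ∈ S) n := fun i => by
    simp only [add_right_comm i n, Nat.add_mod_right]
  have hbounds {s : ℕ} (hs : s ∈ S) : l ≤ s ∧ s ≤ d := mem_Icc.1 (hS hs)
  -- A window ending at `u` starts at `u + 1 - b`, which is `u + (n + 1 - b)` modulo `n`.
  rw [← Nat.filter_Ico_card_eq_of_periodic (l + (n + 1 - b)) n _ hper,
    ← card_map (s := S + range b) (addRightEmbedding (n + 1 - b))]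
  congr 1
  ext i
  simp only [mem_filter, mem_Ico, mem_map, mem_add, mem_range, addRightEmbedding_apply]
  constructor
  · rintro ⟨hi, j, hj, hmem⟩
    have hs := hbounds hmem
    have hwrap : n + (i + j) % n = i + j := by
      have hdiv := Nat.div_add_mod (i + j) n
      rcases hq : (i + j) / n with _ | _ | q <;> rw [hq] at hdiv
      · omega
      · omega
      · rw [mul_add_one, mul_add_one] at hdiv
        omega
    exact ⟨(i + j) % n + (b - 1 - j), ⟨_, hmem, _, by omega, rfl⟩, by omega⟩
  · rintro ⟨_, ⟨s, hs, t, ht, rfl⟩, rfl⟩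
    have hs' := hbounds hs
    refine ⟨by omega, b - 1 - t, by omega, ?_⟩
    rwa [show s + t + (n + 1 - b) + (b - 1 - t) = s + n by omega, Nat.add_mod_right,
      Nat.mod_eq_of_lt (by omega)]

section Weight

variable {F : Type*} [Zero F]

open Classical in
lemma wB_eq_count (b n : ℕ) (f : ℕ → F) :
    wB b (fun i : Fin n => f i) = Nat.count (fun i => ∃ j < b, f ((i + j) % n) ≠ 0) n := by
  have hwindow (i : Fin n) : piB b (fun i : Fin n => f i) i ≠ (fun _ => 0) ↔
      ∃ j < b, f ((i + j) % n) ≠ 0 := by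
    simp only [piB, Function.ne_iff, Fin.exists_iff, exists_prop]
  simp only [wB, hwindow]
  rw [Nat.count_eq_card_filter_range, ← Nat.Iio_eq_range, ← Fin.map_valEmbedding_univ, filter_map,
    card_map]
  rfl

lemma wB_mod_eq_mul (b a m : ℕ) (f : ℕ → F) :
    wB b (fun i : Fin (a * m) => f (i % a)) = m * wB b (fun i : Fin a => f i) := by
  classical
  have hper : Periodic (fun i => ∃ j < b, f ((i + j) % a) ≠ 0) a := fun i => by
    simp only [add_right_comm i a, Nat.add_mod_right]
  rw [wB_eq_count b (a * m) fun i => f (i % a), wB_eq_count, ← count_mul_of_periodic hper]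
  simp only [Nat.mod_mul_right_mod]

end Weight

lemma wB_coeffVec_eq_card_support_add_range {R : Type*} [Semiring R] {g : R[X]} {n b : ℕ}
    (hdeg : g.natDegree < n) (hgap : g.natDegree + b ≤ n + g.natTrailingDegree) :
    wB b (coeffVec n g) = #(g.support + range b) := by
  classical
  have hsupp : g.support ⊆ Icc g.natTrailingDegree g.natDegree := fun s hs =>
    mem_Icc.2 ⟨natTrailingDegree_le_of_mem_supp s hs, le_natDegree_of_mem_supp s hs⟩
  rw [← count_window_eq_card_add_range hsupp hdeg hgap]
  simp only [mem_support_iff]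
  exact (wB_eq_count b n g.coeff).trans (by congr)

lemma coeff_sum_X_pow_mul {R : Type*} [Semiring R] {g : R[X]} {a : ℕ} (hdeg : g.natDegree < a)
    {m j : ℕ} (hj : j < a * m) :
    ((∑ i ∈ range m, X ^ (a * i)) * g).coeff j = g.coeff (j % a) := by
  have hdiv : j / a ∈ range m := mem_range.2 (Nat.div_lt_of_lt_mul hj)
  simp only [sum_mul, finsetSum_coeff, coeff_X_pow_mul']
  rw [sum_eq_single_of_mem _ hdiv, if_pos (Nat.mul_div_le j a), ← Nat.mod_eq_sub_mul_div]
  intro i _ hi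
  split_ifs with hle
  · refine coeff_eq_zero_of_natDegree_lt ?_
    have hlt : i < j / a := lt_of_le_of_ne
      ((Nat.le_div_iff_mul_le (by omega)).2 (by rwa [mul_comm])) hi
    have hblock : a * (i + 1) ≤ j := (Nat.mul_le_mul_left a hlt).trans (Nat.mul_div_le j a)
    rw [mul_add_one] at hblock
    omega
  · rfl

lemma X_sub_one_pow_sub_eq_sum {R : Type*} [Ring R] {p : ℕ} [Fact p.Prime] [CharP R p] {k e : ℕ}
    (hk : k ≤ e) :
    (X - 1 : R[X]) ^ (p ^ e - p ^ (e - k)) = ∑ i ∈ range (p ^ k), X ^ (p ^ (e - k) * i) := by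
  have hp : 0 < p := (Fact.out : p.Prime).pos
  have hmonic : ((X - 1 : R[X]) ^ p ^ (e - k)).Monic := (monic_X_sub_C (1 : R)).pow _
  have hfrob (r : ℕ) : (X - 1 : R[X]) ^ p ^ r = X ^ p ^ r - 1 := by
    rw [sub_pow_char_pow_of_commute _ _ (Commute.one_right X), one_pow]
  apply hmonic.isRegular.right
  calc (X - 1 : R[X]) ^ (p ^ e - p ^ (e - k)) * (X - 1) ^ p ^ (e - k)
      = (X ^ p ^ (e - k)) ^ p ^ k - 1 := by
        rw [← pow_add, Nat.sub_add_cancel (Nat.pow_le_pow_right hp (Nat.sub_le e k)), hfrob,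
          ← pow_mul, ← pow_add, Nat.sub_add_cancel hk]
    _ = (∑ i ∈ range (p ^ k), X ^ (p ^ (e - k) * i)) * (X - 1) ^ p ^ (e - k) := by
        simp only [hfrob, pow_mul, geom_sum_mul]

lemma natDegree_add_le_add_natTrailingDegree {R : Type*} [Semiring R] {g : R[X]} (hg : g ≠ 0)
    {q b : ℕ} (h : (g.natDegree : ℤ) ≤ q - b ∨
      ∀ j : ℕ, (j : ℤ) ≤ b - q + g.natDegree - 1 → g.coeff j = 0) :
    g.natDegree + b ≤ q + g.natTrailingDegree := by
  rcases h with hshort | hlow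
  · omega
  · by_contra! hlt
    exact coeff_natTrailingDegree_ne_zero.2 hg (hlow _ (by omega))

theorem b_weight_lemma_case1_general {R : Type*} [Ring R] {p : ℕ} [Fact p.Prime] [CharP R p]
    {e k b : ℕ} (hk : k ≤ e) {g : R[X]} (hdeg : g.natDegree < p ^ (e - k))
    (hgap : g.natDegree + b ≤ p ^ (e - k) + g.natTrailingDegree) :
    wB b (coeffVec (p ^ e) ((X - 1) ^ (p ^ e - p ^ (e - k)) * g)) =
      p ^ k * wB b (coeffVec (p ^ e) g) := by
  have hp : 0 < p := (Fact.out : p.Prime).pos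
  have hle : p ^ (e - k) ≤ p ^ e := Nat.pow_le_pow_right hp (Nat.sub_le e k)
  have hlen : p ^ e = p ^ (e - k) * p ^ k := by rw [← pow_add, Nat.sub_add_cancel hk]
  have hcopies : coeffVec (p ^ e) ((X - 1) ^ (p ^ e - p ^ (e - k)) * g) =
      fun i : Fin (p ^ e) => g.coeff (i % p ^ (e - k)) := by
    funext i
    rw [coeffVec, X_sub_one_pow_sub_eq_sum hk, coeff_sum_X_pow_mul hdeg (hlen ▸ i.2)]
  calc wB b (coeffVec (p ^ e) ((X - 1) ^ (p ^ e - p ^ (e - k)) * g))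
      = p ^ k * wB b (coeffVec (p ^ (e - k)) g) := by
        rw [hcopies, hlen]
        exact wB_mod_eq_mul b _ _ g.coeff
    _ = p ^ k * #(g.support + range b) := by
        rw [wB_coeffVec_eq_card_support_add_range hdeg hgap]
    _ = p ^ k * wB b (coeffVec (p ^ e) g) := by
        rw [wB_coeffVec_eq_card_support_add_range (hdeg.trans_le hle) (by omega)]

/-- Let `e ≥ 2`, `1 ≤ k ≤ e-1`, let `g` be a nonzero polynomial over `𝔽_{p^m}`
of degree `d < p^{e-k}`, let `2 ≤ b ≤ p^e - d`, and let
`c(x) = (x-1)^{p^e - p^{e-k}} g(x)`.  If `d ≤ p^{e-k} - b`, or `g_j = 0` for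
every `0 ≤ j ≤ b - p^{e-k} + d - 1`, then `ω_b(c(x)) = p^k ω_b(g(x))`. -/
theorem b_weight_lemma_case1 (p m e k : ℕ) [Fact p.Prime] (hm : 0 < m)
    (he : 2 ≤ e) (hk1 : 1 ≤ k) (hk2 : k ≤ e - 1)
    (g : Polynomial (GaloisField p m)) (hg : g ≠ 0)
    (d : ℕ) (hd : g.natDegree = d) (hdlt : d < p ^ (e - k))
    (b : ℕ) (hb2 : 2 ≤ b) (hb : b ≤ p ^ e - d)
    (hcase : (d : ℤ) ≤ (p : ℤ) ^ (e - k) - b ∨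
      ∀ j : ℕ, (j : ℤ) ≤ (b : ℤ) - (p : ℤ) ^ (e - k) + d - 1 → g.coeff j = 0) :
    wB b (coeffVec (p ^ e) ((X - 1) ^ (p ^ e - p ^ (e - k)) * g)) =
      p ^ k * wB b (coeffVec (p ^ e) g) := by
  subst hd
  exact b_weight_lemma_case1_general (by omega) hdlt
    (natDegree_add_le_add_natTrailingDegree hg (by exact_mod_cast hcase))
end
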